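/- If K and C are o-symmetric convex bodies in ℝⁿ with |C| = |K|, then A(K,C) = |K Δ C| / |K|; that is, the minimum of |αK Δ (x+αC)| over x ∈ ℝⁿ, where α = |K|^{−1/n}, is attained at x = 0. -/

import Mathlib

open MeasureTheory Pointwise

noncomputable section

/-- The homothetic distance `A(K,C)`: with `α = |K|^(−1/n)` and `β = |C|^(−1/n)`,
`A(K,C) = inf{|αK Δ (x+βC)| : x ∈ ℝⁿ}`. -/
def homDist {n : ℕ} (K C : Set (EuclideanSpace ℝ (Fin n))) : ℝ :=
  sInf {r : ℝ | ∃ x : EuclideanSpace ℝ (Fin n),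
    r = (volume (symmDiff (((volume K).toReal ^ (-(1:ℝ)/(n:ℝ))) • K)
          ({x} + ((volume C).toReal ^ (-(1:ℝ)/(n:ℝ))) • C))).toReal}

/-!
For `A = K ∩ (x + C)`, symmetry and convexity give `½ A + ½ (-A) ⊆ K ∩ C`, so the
Brunn–Minkowski inequality in the form `|½ A + ½ B| ≥ |A|^½ |B|^½` yields
`|K ∩ (x + C)| ≤ |K ∩ C|`. Since `|K Δ (x + C)| + 2 |K ∩ (x + C)| = |K| + |C|`, no translate of `C`
is closer to `K` than `C` itself.

Brunn–Minkowski is the Prékopa–Leindler inequality for indicator functions. On the line,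
Prékopa–Leindler follows by integrating `|A| + |B| ≤ |A + B|` over superlevel sets of functions
normalized to have supremum `1`; Fubini then carries it to products, and uniqueness of Haar measure
to every finite-dimensional space.
-/

open Module Set
open scoped ENNReal

section OneDimensional

theorem volume_add_volume_le_volume_add_of_isCompact {A B : Set ℝ} (hA : IsCompact A)
    (hB : IsCompact B) (hA₀ : A.Nonempty) (hB₀ : B.Nonempty) :
    volume A + volume B ≤ volume (A + B) := by
  obtain ⟨a, haA, ha⟩ := hA.exists_isGreatest hA₀
  obtain ⟨b, hbB, hb⟩ := hB.exists_isLeast hB₀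
  -- The translates `b + A` and `a + B` lie in `A + B` and meet only at `a + b`.
  have inter_subset : (b +ᵥ A) ∩ (a +ᵥ B) ⊆ {a + b} := by
    rintro _ ⟨⟨x, hx, rfl⟩, ⟨y, hy, hxy⟩⟩
    have hxa := ha hx
    have hby := hb hy
    simp only [vadd_eq_add] at hxy
    simp only [vadd_eq_add, mem_singleton_iff]
    linarith
  have union_subset : (b +ᵥ A) ∪ (a +ᵥ B) ⊆ A + B := by
    rintro _ (⟨x, hx, rfl⟩ | ⟨y, hy, rfl⟩)
    · exact ⟨x, hx, b, hbB, add_comm x b⟩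
    · exact ⟨a, haA, y, hy, rfl⟩
  calc volume A + volume B
      = volume (b +ᵥ A) + volume (a +ᵥ B) := by rw [measure_vadd, measure_vadd]
    _ = volume ((b +ᵥ A) ∪ (a +ᵥ B)) + volume ((b +ᵥ A) ∩ (a +ᵥ B)) :=
        (measure_union_add_inter _ (hB.measurableSet.const_vadd a)).symm
    _ = volume ((b +ᵥ A) ∪ (a +ᵥ B)) := by
        rw [measure_mono_null inter_subset Real.volume_singleton, add_zero]
    _ ≤ volume (A + B) := measure_mono union_subset

theorem volume_add_volume_le_volume_add {A B : Set ℝ} (hA : MeasurableSet A)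
    (hB : MeasurableSet B) (hA₀ : A.Nonempty) (hB₀ : B.Nonempty) :
    volume A + volume B ≤ volume (A + B) := by
  obtain ⟨a, ha⟩ := hA₀
  obtain ⟨b, hb⟩ := hB₀
  simp only [hA.measure_eq_iSup_isCompact, hB.measure_eq_iSup_isCompact, iSup_and']
  refine ENNReal.biSup_add_biSup_le' ⟨∅, empty_subset A, isCompact_empty⟩
    ⟨∅, empty_subset B, isCompact_empty⟩ ?_
  rintro K ⟨hKA, hK⟩ L ⟨hLB, hL⟩
  calc volume K + volume L
      ≤ volume (insert a K) + volume (insert b L) :=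
        add_le_add (measure_mono (subset_insert a K)) (measure_mono (subset_insert b L))
    _ ≤ volume (insert a K + insert b L) :=
        volume_add_volume_le_volume_add_of_isCompact (hK.insert a) (hL.insert b)
          (insert_nonempty a K) (insert_nonempty b L)
    _ ≤ volume (A + B) :=
        measure_mono (add_subset_add (insert_subset ha hKA) (insert_subset hb hLB))

theorem ofReal_mul_volume_add_le_volume_smul_add_smul {a b : ℝ} (ha : 0 < a) (hb : 0 < b)
    {A B : Set ℝ} (hA : MeasurableSet A) (hB : MeasurableSet B) (hA₀ : A.Nonempty)
    (hB₀ : B.Nonempty) :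
    ENNReal.ofReal a * volume A + ENNReal.ofReal b * volume B ≤ volume (a • A + b • B) := by
  have volume_smul {c : ℝ} (hc : 0 < c) (S : Set ℝ) :
      volume (c • S) = ENNReal.ofReal c * volume S := by
    rw [Measure.addHaar_smul, finrank_self, pow_one, abs_of_pos hc]
  rw [← volume_smul ha, ← volume_smul hb]
  exact volume_add_volume_le_volume_add (hA.const_smul₀ a) (hB.const_smul₀ b)
    hA₀.smul_set hB₀.smul_set

end OneDimensional

section Lintegral

variable {α : Type*} [MeasurableSpace α] {μ : Measure α}

theorem volume_restrict_Ioi_setOf_ofReal_lt (y : ℝ≥0∞) :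
    volume.restrict (Ioi 0) {t : ℝ | ENNReal.ofReal t < y} = y := by
  have hmeas : MeasurableSet {t : ℝ | ENNReal.ofReal t < y} :=
    measurableSet_lt ENNReal.measurable_ofReal measurable_const
  rw [Measure.restrict_apply hmeas]
  rcases eq_or_ne y ∞ with rfl | hy
  · simp
  · have : {t : ℝ | ENNReal.ofReal t < y} ∩ Ioi 0 = Ioo 0 y.toReal := by
      ext t
      rw [inter_comm]
      exact and_congr_right fun ht ↦ ENNReal.ofReal_lt_iff_lt_toReal (le_of_lt ht) hy
    rw [this, Real.volume_Ioo, sub_zero, ENNReal.ofReal_toReal hy]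

theorem lintegral_eq_lintegral_measure_ofReal_lt [SFinite μ] {f : α → ℝ≥0∞} (hf : Measurable f) :
    ∫⁻ x, f x ∂μ = ∫⁻ t in Ioi (0 : ℝ), μ {x | ENNReal.ofReal t < f x} := by
  have hmeas : MeasurableSet {p : α × ℝ | ENNReal.ofReal p.2 < f p.1} :=
    measurableSet_lt (ENNReal.measurable_ofReal.comp measurable_snd) (hf.comp measurable_fst)
  calc ∫⁻ x, f x ∂μ
      = ∫⁻ x, volume.restrict (Ioi 0) {t : ℝ | ENNReal.ofReal t < f x} ∂μ := by
        simp only [volume_restrict_Ioi_setOf_ofReal_lt]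
    _ = μ.prod (volume.restrict (Ioi 0)) {p | ENNReal.ofReal p.2 < f p.1} :=
        (Measure.prod_apply hmeas).symm
    _ = ∫⁻ t in Ioi (0 : ℝ), μ {x | ENNReal.ofReal t < f x} := Measure.prod_apply_symm hmeas

theorem measurable_measure_ofReal_lt (f : α → ℝ≥0∞) :
    Measurable fun t : ℝ ↦ μ {x | ENNReal.ofReal t < f x} :=
  Antitone.measurable fun _ _ hst ↦
    measure_mono fun _ hx ↦ (ENNReal.ofReal_le_ofReal hst).trans_lt hx

theorem lintegral_eq_iSup_lintegral_inf_natCast {f : α → ℝ≥0∞} (hf : Measurable f) :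
    ∫⁻ x, f x ∂μ = ⨆ n : ℕ, ∫⁻ x, f x ⊓ n ∂μ := by
  rw [← lintegral_iSup (fun n ↦ hf.inf_const _)]
  · simp only [← inf_iSup_eq, ENNReal.iSup_natCast, inf_top_eq]
  · intro m n hmn x
    exact inf_le_inf_left _ (Nat.cast_le.2 hmn)

theorem mul_lintegral_div {c : ℝ≥0∞} (hc₀ : c ≠ 0) (hc_top : c ≠ ∞) (f : α → ℝ≥0∞) :
    c * ∫⁻ x, f x / c ∂μ = ∫⁻ x, f x ∂μ := by
  rw [← lintegral_const_mul' c _ hc_top]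
  simp only [ENNReal.mul_div_cancel hc₀ hc_top]

end Lintegral

section WeightedMeans

variable {a b : ℝ}

theorem ennreal_rpow_mul_rpow_self (ha : 0 ≤ a) (hb : 0 ≤ b) (hab : a + b = 1) (x : ℝ≥0∞) :
    x ^ a * x ^ b = x := by
  rw [← ENNReal.rpow_add_of_nonneg a b ha hb, hab, ENNReal.rpow_one]

theorem ennreal_rpow_mul_rpow_le_ofReal_mul_add (ha : 0 < a) (hb : 0 < b) (hab : a + b = 1)
    (x y : ℝ≥0∞) : x ^ a * y ^ b ≤ ENNReal.ofReal a * x + ENNReal.ofReal b * y := by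
  have young := ENNReal.young_inequality (x ^ a) (y ^ b) (.inv_inv ha hb hab)
  rwa [ENNReal.rpow_rpow_inv ha.ne', ENNReal.rpow_rpow_inv hb.ne',
    ENNReal.ofReal_inv_of_pos ha, ENNReal.ofReal_inv_of_pos hb, div_eq_mul_inv, div_eq_mul_inv,
    inv_inv, inv_inv, mul_comm x, mul_comm y] at young

end WeightedMeans

/-- The Prékopa–Leindler inequality for the measure `μ` with weights `a` and `b`. Stating it as a
property of `μ` lets it pass to product measures and along linear equivalences. -/
def PrekopaLeindler {E : Type*} [AddCommGroup E] [Module ℝ E] [MeasurableSpace E]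
    (μ : Measure E) (a b : ℝ) : Prop :=
  ∀ ⦃f g h : E → ℝ≥0∞⦄, Measurable f → Measurable g → Measurable h →
    (∀ x y, f x ^ a * g y ^ b ≤ h (a • x + b • y)) →
    (∫⁻ x, f x ∂μ) ^ a * (∫⁻ x, g x ∂μ) ^ b ≤ ∫⁻ x, h x ∂μ

section Real

variable {a b : ℝ} {f g h : ℝ → ℝ≥0∞}

theorem ofReal_mul_lintegral_add_le_lintegral_of_iSup_eq_one (ha : 0 < a) (hb : 0 < b)
    (hab : a + b = 1) (hf : Measurable f) (hg : Measurable g) (hh : Measurable h)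
    (hf₁ : ⨆ x, f x = 1) (hg₁ : ⨆ x, g x = 1)
    (hfgh : ∀ x y, f x ^ a * g y ^ b ≤ h (a • x + b • y)) :
    ENNReal.ofReal a * (∫⁻ x, f x) + ENNReal.ofReal b * (∫⁻ x, g x) ≤ ∫⁻ x, h x := by
  have superlevel_subset (t : ℝ≥0∞) : a • {x | t < f x} + b • {x | t < g x} ⊆ {x | t < h x} := by
    rintro _ ⟨_, ⟨x, hx, rfl⟩, _, ⟨y, hy, rfl⟩, rfl⟩
    calc t = t ^ a * t ^ b := (ennreal_rpow_mul_rpow_self ha.le hb.le hab t).symm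
      _ < f x ^ a * g y ^ b :=
          ENNReal.mul_lt_mul (ENNReal.rpow_lt_rpow hx ha) (ENNReal.rpow_lt_rpow hy hb)
      _ ≤ h (a • x + b • y) := hfgh x y
  have superlevel_eq_empty {u : ℝ → ℝ≥0∞} (hu : ⨆ x, u x = 1) {t : ℝ≥0∞} (ht : 1 ≤ t) :
      {x | t < u x} = ∅ :=
    eq_empty_of_forall_notMem fun x hx ↦ (hx.trans_le ((le_iSup u x).trans (hu.le.trans ht))).false
  simp only [lintegral_eq_lintegral_measure_ofReal_lt hf,
    lintegral_eq_lintegral_measure_ofReal_lt hg, lintegral_eq_lintegral_measure_ofReal_lt hh]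
  rw [← lintegral_const_mul _ (measurable_measure_ofReal_lt f),
    ← lintegral_const_mul _ (measurable_measure_ofReal_lt g),
    ← lintegral_add_left ((measurable_measure_ofReal_lt f).const_mul _)]
  refine lintegral_mono fun t ↦ ?_
  rcases lt_or_ge (ENNReal.ofReal t) 1 with ht | ht
  · exact (ofReal_mul_volume_add_le_volume_smul_add_smul ha hb
      (measurableSet_lt measurable_const hf) (measurableSet_lt measurable_const hg)
      (lt_iSup_iff.1 (ht.trans_eq hf₁.symm)) (lt_iSup_iff.1 (ht.trans_eq hg₁.symm))).trans
      (measure_mono (superlevel_subset _))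
  · simp only [superlevel_eq_empty hf₁ ht, superlevel_eq_empty hg₁ ht, measure_empty, mul_zero,
      add_zero, zero_le]

theorem lintegral_rpow_mul_lintegral_rpow_le_of_iSup_ne_top (ha : 0 < a) (hb : 0 < b)
    (hab : a + b = 1) (hf : Measurable f) (hg : Measurable g) (hh : Measurable h)
    (hf_top : ⨆ x, f x ≠ ∞) (hg_top : ⨆ x, g x ≠ ∞)
    (hfgh : ∀ x y, f x ^ a * g y ^ b ≤ h (a • x + b • y)) :
    (∫⁻ x, f x) ^ a * (∫⁻ x, g x) ^ b ≤ ∫⁻ x, h x := by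
  set F := ⨆ x, f x with hF
  set G := ⨆ x, g x with hG
  rcases eq_or_ne F 0 with hF₀ | hF₀
  · simp [ENNReal.iSup_eq_zero.1 hF₀, ha]
  rcases eq_or_ne G 0 with hG₀ | hG₀
  · simp [ENNReal.iSup_eq_zero.1 hG₀, hb]
  have hFa₀ : F ^ a ≠ 0 := by simp [hF₀, ha.le]
  have hFa_top : F ^ a ≠ ∞ := ENNReal.rpow_ne_top_of_nonneg ha.le hf_top
  have hGb₀ : G ^ b ≠ 0 := by simp [hG₀, hb.le]
  have hGb_top : G ^ b ≠ ∞ := ENNReal.rpow_ne_top_of_nonneg hb.le hg_top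
  have normalized := ofReal_mul_lintegral_add_le_lintegral_of_iSup_eq_one ha hb hab
    (hf.div_const F) (hg.div_const G) (hh.div_const (F ^ a * G ^ b))
    (by rw [← ENNReal.iSup_div, ← hF, ENNReal.div_self hF₀ hf_top])
    (by rw [← ENNReal.iSup_div, ← hG, ENNReal.div_self hG₀ hg_top])
    (fun x y ↦ by
      rw [ENNReal.div_rpow_of_nonneg _ _ ha.le, ENNReal.div_rpow_of_nonneg _ _ hb.le,
        ← ENNReal.mul_div_mul_comm (.inl hFa₀) (.inl hFa_top)]
      gcongr
      exact hfgh x y)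
  calc (∫⁻ x, f x) ^ a * (∫⁻ x, g x) ^ b
      = (F * ∫⁻ x, f x / F) ^ a * (G * ∫⁻ x, g x / G) ^ b := by
        rw [mul_lintegral_div hF₀ hf_top f, mul_lintegral_div hG₀ hg_top g]
    _ = F ^ a * G ^ b * ((∫⁻ x, f x / F) ^ a * (∫⁻ x, g x / G) ^ b) := by
        rw [ENNReal.mul_rpow_of_nonneg _ _ ha.le, ENNReal.mul_rpow_of_nonneg _ _ hb.le,
          mul_mul_mul_comm]
    _ ≤ F ^ a * G ^ b * ∫⁻ x, h x / (F ^ a * G ^ b) := by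
        gcongr
        exact (ennreal_rpow_mul_rpow_le_ofReal_mul_add ha hb hab _ _).trans normalized
    _ = ∫⁻ x, h x :=
        mul_lintegral_div (mul_ne_zero hFa₀ hGb₀) (ENNReal.mul_ne_top hFa_top hGb_top) h

theorem prekopaLeindler_volume_real (ha : 0 < a) (hb : 0 < b) (hab : a + b = 1) :
    PrekopaLeindler (volume : Measure ℝ) a b := by
  intro f g h hf hg hh hfgh
  rw [lintegral_eq_iSup_lintegral_inf_natCast hf, lintegral_eq_iSup_lintegral_inf_natCast hg,
    ← ENNReal.orderIsoRpow_apply a ha, ← ENNReal.orderIsoRpow_apply b hb, OrderIso.map_iSup,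
    OrderIso.map_iSup, ENNReal.iSup_mul]
  simp only [ENNReal.mul_iSup, ENNReal.orderIsoRpow_apply]
  refine iSup₂_le fun m n ↦ ?_
  refine lintegral_rpow_mul_lintegral_rpow_le_of_iSup_ne_top ha hb hab (hf.inf_const _)
    (hg.inf_const _) hh ?_ ?_ fun x y ↦ ?_
  · exact ne_top_of_le_ne_top (ENNReal.natCast_ne_top m) (iSup_le fun _ ↦ inf_le_right)
  · exact ne_top_of_le_ne_top (ENNReal.natCast_ne_top n) (iSup_le fun _ ↦ inf_le_right)
  · exact le_trans (by gcongr <;> exact inf_le_left) (hfgh x y)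

end Real

namespace PrekopaLeindler

variable {E F : Type*} {a b : ℝ}

theorem of_subsingleton [AddCommGroup E] [Module ℝ E] [MeasurableSpace E] [Subsingleton E]
    (μ : Measure E) (ha : 0 ≤ a) (hb : 0 ≤ b) (hab : a + b = 1) : PrekopaLeindler μ a b := by
  intro f g h _ _ _ hfgh
  let : Unique E := uniqueOfSubsingleton 0
  calc (∫⁻ x, f x ∂μ) ^ a * (∫⁻ x, g x ∂μ) ^ b
      = f default ^ a * g default ^ b * (μ univ ^ a * μ univ ^ b) := by
        rw [lintegral_unique, lintegral_unique, ENNReal.mul_rpow_of_nonneg _ _ ha,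
          ENNReal.mul_rpow_of_nonneg _ _ hb, mul_mul_mul_comm]
    _ ≤ h default * μ univ := by
        rw [ennreal_rpow_mul_rpow_self ha hb hab]
        gcongr
        exact (hfgh _ _).trans_eq (congrArg h (Subsingleton.elim _ _))
    _ = ∫⁻ x, h x ∂μ := (lintegral_unique h).symm

theorem prod [AddCommGroup E] [Module ℝ E] [MeasurableSpace E] [AddCommGroup F] [Module ℝ F]
    [MeasurableSpace F] {μ : Measure E} {ν : Measure F} [SFinite ν]
    (hμ : PrekopaLeindler μ a b) (hν : PrekopaLeindler ν a b) :
    PrekopaLeindler (μ.prod ν) a b := by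
  intro f g h hf hg hh hfgh
  rw [lintegral_prod _ hf.aemeasurable, lintegral_prod _ hg.aemeasurable,
    lintegral_prod _ hh.aemeasurable]
  exact hμ hf.lintegral_prod_right' hg.lintegral_prod_right' hh.lintegral_prod_right' fun x x' ↦
    hν (hf.comp measurable_prodMk_left) (hg.comp measurable_prodMk_left)
      (hh.comp measurable_prodMk_left) fun y y' ↦ hfgh (x, y) (x', y')

theorem smul [AddCommGroup E] [Module ℝ E] [MeasurableSpace E] {μ : Measure E}
    (hμ : PrekopaLeindler μ a b) (ha : 0 ≤ a) (hb : 0 ≤ b) (hab : a + b = 1) (c : ℝ≥0∞) :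
    PrekopaLeindler (c • μ) a b := by
  intro f g h hf hg hh hfgh
  simp only [lintegral_smul_measure, smul_eq_mul]
  rw [ENNReal.mul_rpow_of_nonneg _ _ ha, ENNReal.mul_rpow_of_nonneg _ _ hb, mul_mul_mul_comm,
    ennreal_rpow_mul_rpow_self ha hb hab]
  gcongr
  exact hμ hf hg hh hfgh

theorem map [AddCommGroup E] [Module ℝ E] [MeasurableSpace E] [AddCommGroup F] [Module ℝ F]
    [MeasurableSpace F] {μ : Measure E} (hμ : PrekopaLeindler μ a b) (L : E →ₗ[ℝ] F)
    (hL : Measurable L) : PrekopaLeindler (μ.map L) a b := by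
  intro f g h hf hg hh hfgh
  rw [lintegral_map hf hL, lintegral_map hg hL, lintegral_map hh hL]
  refine hμ (hf.comp hL) (hg.comp hL) (hh.comp hL) fun x y ↦ ?_
  simpa only [map_add, map_smul] using hfgh (L x) (L y)

section Haar

variable [NormedAddCommGroup E] [NormedSpace ℝ E] [FiniteDimensional ℝ E] [MeasurableSpace E]
  [BorelSpace E] [NormedAddCommGroup F] [NormedSpace ℝ F] [MeasurableSpace F] [BorelSpace F]

theorem of_finrank_eq [FiniteDimensional ℝ F] {μ : Measure E} [μ.IsAddHaarMeasure]
    (hμ : PrekopaLeindler μ a b) (ha : 0 ≤ a) (hb : 0 ≤ b) (hab : a + b = 1)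
    (hEF : finrank ℝ E = finrank ℝ F) (ν : Measure F) [ν.IsAddHaarMeasure] :
    PrekopaLeindler ν a b := by
  let e : E ≃L[ℝ] F := .ofFinrankEq hEF
  have : (μ.map e).IsAddHaarMeasure := e.isAddHaarMeasure_map μ
  rw [ν.isAddLeftInvariant_eq_smul (μ.map e)]
  exact (hμ.map e.toLinearEquiv.toLinearMap e.continuous.measurable).smul ha hb hab _

theorem volume_pi (ha : 0 < a) (hb : 0 < b) (hab : a + b = 1) (n : ℕ) :
    PrekopaLeindler (volume : Measure (Fin n → ℝ)) a b := by
  induction n with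
  | zero => exact of_subsingleton volume ha.le hb.le hab
  | succ n ih =>
    exact ((prekopaLeindler_volume_real ha hb hab).prod ih).of_finrank_eq ha.le hb.le hab
      (by simp [add_comm]) volume

theorem of_isAddHaarMeasure (ha : 0 < a) (hb : 0 < b) (hab : a + b = 1) (μ : Measure E)
    [μ.IsAddHaarMeasure] : PrekopaLeindler μ a b :=
  (volume_pi ha hb hab (finrank ℝ E)).of_finrank_eq ha.le hb.le hab (by simp) μ

end Haar

theorem measure_rpow_mul_rpow_le [AddCommGroup E] [Module ℝ E] [MeasurableSpace E]
    {μ : Measure E} (hμ : PrekopaLeindler μ a b) (ha : 0 < a) (hb : 0 < b) {A B : Set E}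
    (hA : NullMeasurableSet A μ) (hB : NullMeasurableSet B μ) :
    μ A ^ a * μ B ^ b ≤ μ (a • A + b • B) := by
  obtain ⟨A', hA'A, hA', hA'_ae⟩ := hA.exists_measurable_subset_ae_eq
  obtain ⟨B', hB'B, hB', hB'_ae⟩ := hB.exists_measurable_subset_ae_eq
  set D := toMeasurable μ (a • A + b • B)
  have hD : MeasurableSet D := measurableSet_toMeasurable _ _
  have indicator_le (x y : E) : A'.indicator (1 : E → ℝ≥0∞) x ^ a * B'.indicator 1 y ^ b ≤
      D.indicator 1 (a • x + b • y) := by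
    by_cases hx : x ∈ A'
    · by_cases hy : y ∈ B'
      · have : a • x + b • y ∈ D := subset_toMeasurable _ _
          (add_mem_add (smul_mem_smul_set (hA'A hx)) (smul_mem_smul_set (hB'B hy)))
        simp [hx, hy, this]
      · simp [hy, hb]
    · simp [hx, ha]
  have := hμ (measurable_one.indicator hA') (measurable_one.indicator hB')
    (measurable_one.indicator hD) indicator_le
  rwa [lintegral_indicator_one hA', lintegral_indicator_one hB', lintegral_indicator_one hD,
    measure_congr hA'_ae, measure_congr hB'_ae, measure_toMeasurable] at this

end PrekopaLeindler

theorem measure_symmDiff_add_two_mul_measure_inter {α : Type*} [MeasurableSpace α] {μ : Measure α}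
    {s t : Set α} (hs : NullMeasurableSet s μ) (ht : NullMeasurableSet t μ) :
    μ (symmDiff s t) + 2 * μ (s ∩ t) = μ s + μ t := by
  rw [measure_symmDiff_eq hs ht, ← measure_inter_add_sdiff₀ s ht, ← measure_inter_add_sdiff₀ t hs,
    inter_comm t s]
  ring

theorem inv_two_smul_inter_vadd_add_neg_subset {E : Type*} [AddCommGroup E] [Module ℝ E]
    {K C : Set E} (hK : Convex ℝ K) (hC : Convex ℝ C) (hK_neg : -K = K) (hC_neg : -C = C) (x : E) :
    (2⁻¹ : ℝ) • (K ∩ (x +ᵥ C)) + (2⁻¹ : ℝ) • (-(K ∩ (x +ᵥ C))) ⊆ K ∩ C := by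
  rintro _ ⟨_, ⟨_, ⟨hyK, u, hu, rfl⟩, rfl⟩, _, ⟨z, ⟨hzK, v, hv, hvz⟩, rfl⟩, rfl⟩
  have hz : z ∈ K := hK_neg ▸ hzK
  have hv_neg : -v ∈ C := hC_neg ▸ neg_mem_neg.2 hv
  have hz_eq : z = -(x + v) := (neg_eq_iff_eq_neg.2 hvz).symm
  refine ⟨hK hyK hz (by norm_num) (by norm_num) (by norm_num), ?_⟩
  convert hC hu hv_neg (by norm_num) (by norm_num) (by norm_num : (2⁻¹ : ℝ) + 2⁻¹ = 1) using 1
  simp only [hz_eq, vadd_eq_add]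
  module

section Symmetric

variable {E : Type*} [NormedAddCommGroup E] [NormedSpace ℝ E] [FiniteDimensional ℝ E]
  [MeasurableSpace E] [BorelSpace E] (μ : Measure E) [μ.IsAddHaarMeasure] {K C : Set E}

theorem measure_inter_vadd_le_measure_inter (hK : Convex ℝ K) (hC : Convex ℝ C) (hK_neg : -K = K)
    (hC_neg : -C = C) (x : E) : μ (K ∩ (x +ᵥ C)) ≤ μ (K ∩ C) := by
  set A := K ∩ (x +ᵥ C)
  have hA : Convex ℝ A := hK.inter (hC.vadd x)
  calc μ A = μ A ^ (2⁻¹ : ℝ) * μ (-A) ^ (2⁻¹ : ℝ) := by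
        rw [Measure.measure_neg, ennreal_rpow_mul_rpow_self] <;> norm_num
    _ ≤ μ ((2⁻¹ : ℝ) • A + (2⁻¹ : ℝ) • (-A)) :=
        (PrekopaLeindler.of_isAddHaarMeasure (by norm_num) (by norm_num) (by norm_num)
          μ).measure_rpow_mul_rpow_le (by norm_num) (by norm_num) (hA.nullMeasurableSet μ)
          (hA.neg.nullMeasurableSet μ)
    _ ≤ μ (K ∩ C) := measure_mono (inv_two_smul_inter_vadd_add_neg_subset hK hC hK_neg hC_neg x)

theorem measure_symmDiff_le_measure_symmDiff_vadd (hK : Convex ℝ K) (hC : Convex ℝ C)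
    (hK_neg : -K = K) (hC_neg : -C = C) (hK_top : μ K ≠ ∞) (x : E) :
    μ (symmDiff K C) ≤ μ (symmDiff K (x +ᵥ C)) := by
  have inter_ne_top : 2 * μ (K ∩ C) ≠ ∞ :=
    ENNReal.mul_ne_top ENNReal.ofNat_ne_top (measure_ne_top_of_subset inter_subset_left hK_top)
  refine (ENNReal.add_le_add_iff_right inter_ne_top).1 ?_
  calc μ (symmDiff K C) + 2 * μ (K ∩ C)
      = μ K + μ C :=
        measure_symmDiff_add_two_mul_measure_inter (hK.nullMeasurableSet μ) (hC.nullMeasurableSet μ)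
    _ = μ K + μ (x +ᵥ C) := by rw [measure_vadd]
    _ = μ (symmDiff K (x +ᵥ C)) + 2 * μ (K ∩ (x +ᵥ C)) :=
        (measure_symmDiff_add_two_mul_measure_inter (hK.nullMeasurableSet μ)
          ((hC.vadd x).nullMeasurableSet μ)).symm
    _ ≤ μ (symmDiff K (x +ᵥ C)) + 2 * μ (K ∩ C) := by
        gcongr _ + 2 * ?_
        exact measure_inter_vadd_le_measure_inter μ hK hC hK_neg hC_neg x

end Symmetric

section Euclidean

variable {n : ℕ} {K C : Set (EuclideanSpace ℝ (Fin n))}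

theorem homDist_eq_volume_symmDiff_smul (hK : Convex ℝ K) (hC : Convex ℝ C) (hK_neg : -K = K)
    (hC_neg : -C = C) (hK_top : volume K ≠ ∞) (hC_top : volume C ≠ ∞) :
    homDist K C = (volume (symmDiff ((volume K).toReal ^ (-(1 : ℝ) / n) • K)
      ((volume C).toReal ^ (-(1 : ℝ) / n) • C))).toReal := by
  have volume_smul_ne_top (r : ℝ) {S : Set (EuclideanSpace ℝ (Fin n))} (hS : volume S ≠ ∞) :
      volume (r • S) ≠ ∞ := by
    rw [Measure.addHaar_smul]
    exact ENNReal.mul_ne_top ENNReal.ofReal_ne_top hS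
  refine IsLeast.csInf_eq ⟨⟨0, by rw [singleton_zero, zero_add]⟩, ?_⟩
  rintro _ ⟨x, rfl⟩
  have hαK := volume_smul_ne_top ((volume K).toReal ^ (-(1 : ℝ) / n)) hK_top
  have hβC := volume_smul_ne_top ((volume C).toReal ^ (-(1 : ℝ) / n)) hC_top
  rw [← vadd_eq_add, singleton_vadd]
  refine ENNReal.toReal_mono (measure_symmDiff_ne_top hαK ?_) ?_
  · rwa [measure_vadd]
  · exact measure_symmDiff_le_measure_symmDiff_vadd volume (hK.smul _) (hC.smul _)
      (by rw [← smul_set_neg, hK_neg]) (by rw [← smul_set_neg, hC_neg]) hαK x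

theorem toReal_volume_rpow_neg_one_div_pow (hK₀ : volume K ≠ 0) :
    ((volume K).toReal ^ (-(1 : ℝ) / n)) ^ n = (volume K).toReal⁻¹ := by
  rcases eq_or_ne n 0 with rfl | hn
  · have : K = univ := Subsingleton.eq_univ_of_nonempty (nonempty_of_measure_ne_zero hK₀)
    simp [this, volume_euclideanSpace_eq_dirac]
  · rw [← Real.rpow_natCast, ← Real.rpow_mul ENNReal.toReal_nonneg,
      div_mul_cancel₀ _ (Nat.cast_ne_zero.2 hn), Real.rpow_neg_one]

theorem toReal_volume_smul_volume_rpow (hK₀ : volume K ≠ 0)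
    (S : Set (EuclideanSpace ℝ (Fin n))) :
    (volume ((volume K).toReal ^ (-(1 : ℝ) / n) • S)).toReal =
      (volume S).toReal / (volume K).toReal := by
  rw [Measure.addHaar_smul, finrank_euclideanSpace_fin,
    toReal_volume_rpow_neg_one_div_pow hK₀, ENNReal.toReal_mul,
    ENNReal.toReal_ofReal (abs_nonneg _), abs_of_nonneg (by positivity), inv_mul_eq_div]

theorem homDist_eq_of_symmetric_general (hK : Convex ℝ K) (hC : Convex ℝ C) (hK_neg : -K = K)
    (hC_neg : -C = C) (hK₀ : volume K ≠ 0) (hK_top : volume K ≠ ∞)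
    (hvol : volume C = volume K) :
    homDist K C = (volume (symmDiff K C)).toReal / (volume K).toReal := by
  have hα : (volume K).toReal ^ (-(1 : ℝ) / n) ≠ 0 :=
    (Real.rpow_pos_of_pos (ENNReal.toReal_pos hK₀ hK_top) _).ne'
  rw [homDist_eq_volume_symmDiff_smul hK hC hK_neg hC_neg hK_top (hvol.trans_ne hK_top), hvol,
    ← smul_set_symmDiff₀ hα, toReal_volume_smul_volume_rpow hK₀]

end Euclidean

/-- If `K` and `C` are `o`-symmetric convex bodies in `ℝⁿ` with `|C| = |K|`, then
`A(K,C) = |K Δ C| / |K|`; i.e. the minimum defining the homothetic distance is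
attained at `x = 0`. -/
theorem homDist_eq_of_symmetric {n : ℕ}
    (K C : Set (EuclideanSpace ℝ (Fin n)))
    (hKcomp : IsCompact K) (hKconv : Convex ℝ K) (hKint : (interior K).Nonempty)
    (hCcomp : IsCompact C) (hCconv : Convex ℝ C) (hCint : (interior C).Nonempty)
    (hKsymm : K = -K) (hCsymm : C = -C)
    (hvol : volume C = volume K) :
    homDist K C = (volume (symmDiff K C)).toReal / (volume K).toReal := by
  exact homDist_eq_of_symmetric_general hKconv hCconv hKsymm.symm hCsymm.symm
    (Measure.measure_pos_of_nonempty_interior volume hKint).ne' hKcomp.measure_ne_top hvol
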